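/- Let X : ℕ → ℝ satisfy X(0) = 0, X(t+1) = max(X(t) - γ, 0) + p(t) with γ ≥ 0, p(t) ≥ 0. If X is rate stable, i.e. X(t)/t → 0 as t → ∞, then limsup_{t→∞} (1/t)∑_{τ=0}^{t-1} p(τ) ≤ γ. -/

import Mathlib

open Filter

theorem isCoboundedUnder_le_average_of_nonneg {𝕜 : Type*} [Field 𝕜] [LinearOrder 𝕜]
    [IsStrictOrderedRing 𝕜] {p : ℕ → 𝕜} (hp : ∀ t, 0 ≤ p t) :
    IsCoboundedUnder (· ≤ ·) atTop (fun t : ℕ => (∑ τ ∈ Finset.range t, p τ) / (t : 𝕜)) :=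
  isCoboundedUnder_le_of_le atTop fun t =>
    div_nonneg (Finset.sum_nonneg fun τ _ => hp τ) t.cast_nonneg

theorem sub_add_le_of_eq_max_add {M : Type*} [AddCommGroup M] [LinearOrder M]
    [IsOrderedAddMonoid M] {X p : ℕ → M} {γ : M} (hX : ∀ t, X (t + 1) = max (X t - γ) 0 + p t)
    (t : ℕ) : X t - γ + p t ≤ X (t + 1) :=
  calc X t - γ + p t
      ≤ max (X t - γ) 0 + p t := by gcongr; exact le_max_left _ _
    _ = X (t + 1) := (hX t).symm

theorem sum_range_le_sub_add_nsmul {M : Type*} [AddCommGroup M] [PartialOrder M]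
    [IsOrderedAddMonoid M] {X p : ℕ → M} {γ : M} (hX : ∀ t, X t - γ + p t ≤ X (t + 1)) (t : ℕ) :
    ∑ τ ∈ Finset.range t, p τ ≤ X t - X 0 + t • γ := by
  have increment (τ : ℕ) : p τ ≤ X (τ + 1) - X τ + γ := calc
    p τ ≤ X (τ + 1) - (X τ - γ) := le_sub_iff_add_le'.mpr (hX τ)
    _ = X (τ + 1) - X τ + γ := (sub_add _ _ _).symm
  calc ∑ τ ∈ Finset.range t, p τ
      ≤ ∑ τ ∈ Finset.range t, (X (τ + 1) - X τ + γ) := Finset.sum_le_sum fun τ _ => increment τ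
    _ = X t - X 0 + t • γ := by
      rw [Finset.sum_add_distrib, Finset.sum_range_sub, Finset.sum_const, Finset.card_range]

theorem average_le_div_sub_div_add {𝕜 : Type*} [Field 𝕜] [LinearOrder 𝕜] [IsStrictOrderedRing 𝕜]
    {X p : ℕ → 𝕜} {γ : 𝕜} (hX : ∀ t, X t - γ + p t ≤ X (t + 1)) {t : ℕ} (ht : 0 < t) :
    (∑ τ ∈ Finset.range t, p τ) / (t : 𝕜) ≤ X t / t - X 0 / t + γ := by
  have ht' : (0 : 𝕜) < t := Nat.cast_pos.mpr ht
  calc (∑ τ ∈ Finset.range t, p τ) / (t : 𝕜)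
      ≤ (X t - X 0 + t • γ) / t := by gcongr; exact sum_range_le_sub_add_nsmul hX t
    _ = X t / t - X 0 / t + γ := by
      rw [nsmul_eq_mul, add_div, sub_div, mul_div_cancel_left₀ γ ht'.ne']

/-- `hcobdd` excludes averages tending to `-∞`, whose `limsup` in `ℝ` is the junk value `0`. -/
theorem rate_stable_implies_power_constraint_general {X p : ℕ → ℝ} {γ : ℝ}
    (hX : ∀ t, X t - γ + p t ≤ X (t + 1))
    (hrate : Tendsto (fun t : ℕ => X t / (t : ℝ)) atTop (nhds 0))
    (hcobdd : IsCoboundedUnder (· ≤ ·) atTop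
      (fun t : ℕ => (∑ τ ∈ Finset.range t, p τ) / (t : ℝ))) :
    limsup (fun t : ℕ => (∑ τ ∈ Finset.range t, p τ) / (t : ℝ)) atTop ≤ γ := by
  have bound_tendsto : Tendsto (fun t : ℕ => X t / (t : ℝ) - X 0 / t + γ) atTop (nhds γ) := by
    simpa using (hrate.sub (tendsto_const_div_atTop_nhds_zero_nat (X 0))).add_const γ
  have average_le_bound : ∀ᶠ t : ℕ in atTop,
      (∑ τ ∈ Finset.range t, p τ) / (t : ℝ) ≤ X t / t - X 0 / t + γ :=
    (eventually_gt_atTop 0).mono fun _ ht => average_le_div_sub_div_add hX ht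
  exact (limsup_le_limsup average_le_bound hcobdd bound_tendsto.isBoundedUnder_le).trans_eq
    bound_tendsto.limsup_eq

theorem rate_stable_implies_power_constraint (X p : ℕ → ℝ) (γ : ℝ) (hγ : 0 ≤ γ)
    (hX0 : X 0 = 0) (hp : ∀ t, 0 ≤ p t)
    (hX : ∀ t, X (t + 1) = max (X t - γ) 0 + p t)
    (hrate : Filter.Tendsto (fun t : ℕ => X t / (t : ℝ)) Filter.atTop (nhds 0)) :
    Filter.limsup (fun t : ℕ => (∑ τ ∈ Finset.range t, p τ) / (t : ℝ)) Filter.atTop ≤ γ :=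
  rate_stable_implies_power_constraint_general (sub_add_le_of_eq_max_add hX) hrate
    (isCoboundedUnder_le_average_of_nonneg hp)
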